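/- Let K ⊂ ℂ be a compact set and let h be a real-analytic function on an open neighborhood of K (i.e. h is analytic as a function of the two real variables Re z, Im z). Then for every complex measure μ on ℝ^d of finite total variation without singular component (that is, μ = f dx + Σ_n a_n δ_{γ_n} with f ∈ L¹(ℝ^d), γ_n ∈ ℝ^d, Σ_n |a_n| < ∞) there exists a complex measure ν on ℝ^d of finite total variation, also without singular component, such that ν̂(y) = h(μ̂(y)) for every y ∈ ℝ^d with μ̂(y) ∈ K. -/

import Mathlib

open MeasureTheory Real Complex
open scoped RealInnerProductSpace FourierTransform

/-- The Fourier–Stieltjes transform of the measure `μ = f dx + Σ_n a_n δ_{γ_n}` on `ℝ^d`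
(a measure of finite total variation without singular component):
`μ̂(y) = ∫ f(x) e^{-2πi⟨x,y⟩} dx + Σ_n a_n e^{-2πi⟨γ_n, y⟩}`. -/
noncomputable def measureFourier {d : ℕ} (f : EuclideanSpace ℝ (Fin d) → ℂ)
    (a : ℕ → ℂ) (γ : ℕ → EuclideanSpace ℝ (Fin d)) (y : EuclideanSpace ℝ (Fin d)) : ℂ :=
  𝓕 f y + ∑' n : ℕ, a n * Complex.exp (-2 * π * Complex.I * (⟪γ n, y⟫ : ℝ))

/-- `HasRepBound F C`: the function `F` is the Fourier–Stieltjes transform of a measure without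
singular component whose total variation is at most `C`. -/
def HasRepBound {d : ℕ} (F : EuclideanSpace ℝ (Fin d) → ℂ) (C : ℝ) : Prop :=
  ∃ (f : EuclideanSpace ℝ (Fin d) → ℂ) (a : ℕ → ℂ) (γ : ℕ → EuclideanSpace ℝ (Fin d)),
    Integrable f ∧ Summable (fun n => ‖a n‖) ∧ (∫ x, ‖f x‖) + ∑' n, ‖a n‖ ≤ C ∧
      ∀ y, F y = measureFourier f a γ y

namespace HasRepBound

variable {d : ℕ} {F G : EuclideanSpace ℝ (Fin d) → ℂ} {C D : ℝ}

lemma norm_char (γ y : EuclideanSpace ℝ (Fin d)) :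
    ‖Complex.exp (-2 * π * Complex.I * (⟪γ, y⟫ : ℝ))‖ = 1 := by
  rw [show (-2 * π * Complex.I * (⟪γ, y⟫ : ℝ) : ℂ) = ((-2 * π * ⟪γ, y⟫ : ℝ) : ℂ) * Complex.I by
    push_cast; ring]
  exact Complex.norm_exp_ofReal_mul_I _

lemma congr (h : HasRepBound F C) (hFG : ∀ y, G y = F y) : HasRepBound G C := by
  rwa [show G = F from funext hFG]

lemma mono (h : HasRepBound F C) (hCD : C ≤ D) : HasRepBound F D := by
  obtain ⟨f, a, γ, hf, ha, hC, hF⟩ := h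
  exact ⟨f, a, γ, hf, ha, hC.trans hCD, hF⟩

lemma fourier_zero_fun (y : EuclideanSpace ℝ (Fin d)) :
    𝓕 (fun _ : EuclideanSpace ℝ (Fin d) => (0 : ℂ)) y = 0 := by
  simp [Real.fourier_eq]

lemma of_fourier {f : EuclideanSpace ℝ (Fin d) → ℂ} (hf : Integrable f) :
    HasRepBound (𝓕 f) (∫ x, ‖f x‖) :=
  ⟨f, fun _ => 0, fun _ => 0, hf, by simp, by simp,
    fun y => by simp [measureFourier]⟩

lemma of_char_tsum {a : ℕ → ℂ} (ha : Summable fun n => ‖a n‖) (γ : ℕ → EuclideanSpace ℝ (Fin d)) :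
    HasRepBound (fun y => ∑' n, a n * Complex.exp (-2 * π * Complex.I * (⟪γ n, y⟫ : ℝ)))
      (∑' n, ‖a n‖) :=
  ⟨fun _ => 0, a, γ, integrable_zero _ _ _, ha, by simp,
    fun y => by simp [measureFourier, fourier_zero_fun]⟩

lemma of_char (c : ℂ) (γ : EuclideanSpace ℝ (Fin d)) :
    HasRepBound (fun y => c * Complex.exp (-2 * π * Complex.I * (⟪γ, y⟫ : ℝ))) ‖c‖ := by
  have hs : HasSum (fun n : ℕ => ‖if n = 0 then c else 0‖) ‖c‖ := by
    convert! hasSum_ite_eq (0 : ℕ) ‖c‖ using 2 with n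
    split_ifs <;> simp
  have := of_char_tsum hs.summable (fun _ => γ)
  rw [hs.tsum_eq] at this
  refine this.congr fun y => ?_
  rw [tsum_eq_single 0 (by intro n hn; simp [hn])]
  simp

lemma const (c : ℂ) : HasRepBound (fun _ : EuclideanSpace ℝ (Fin d) => c) ‖c‖ :=
  (of_char c 0).congr fun y => by simp

lemma summable_char {a : ℕ → ℂ} (ha : Summable fun n => ‖a n‖)
    (γ : ℕ → EuclideanSpace ℝ (Fin d)) (y : EuclideanSpace ℝ (Fin d)) :
    Summable fun n => a n * Complex.exp (-2 * π * Complex.I * (⟪γ n, y⟫ : ℝ)) :=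
  .of_norm (by simpa only [norm_mul, norm_char, mul_one] using ha)

lemma norm_le (h : HasRepBound F C) (y : EuclideanSpace ℝ (Fin d)) : ‖F y‖ ≤ C := by
  obtain ⟨f, a, γ, hf, ha, hC, hF⟩ := h
  rw [hF]
  refine (norm_add_le _ _).trans (le_trans (add_le_add ?_ ?_) hC)
  · rw [Real.fourier_eq]
    exact (norm_integral_le_integral_norm _).trans (by simp)
  · refine (norm_tsum_le_tsum_norm ?_).trans (by simp only [norm_mul, norm_char, mul_one]; rfl)
    simpa only [norm_mul, norm_char, mul_one] using ha

lemma nonneg (h : HasRepBound F C) : 0 ≤ C := (norm_nonneg _).trans (h.norm_le 0)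

lemma integrable_tsum {f : ℕ → EuclideanSpace ℝ (Fin d) → ℂ} (hf : ∀ k, Integrable (f k))
    (hs : Summable fun k => ∫ x, ‖f k x‖) :
    Integrable (fun x => ∑' k, f k x) ∧ (∫ x, ‖∑' k, f k x‖) ≤ ∑' k, ∫ x, ‖f k x‖ ∧
      ∀ᵐ x, Summable fun k => ‖f k x‖ := by
  have hlint : ∀ k, ∫⁻ x, ‖f k x‖ₑ = ENNReal.ofReal (∫ x, ‖f k x‖) := fun k =>
    (ofReal_integral_norm_eq_lintegral_enorm (hf k)).symm
  have hpos : ∀ k, 0 ≤ ∫ x, ‖f k x‖ := fun k => integral_nonneg fun _ => norm_nonneg _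
  have htot : ∫⁻ x, ∑' k, ‖f k x‖ₑ = ENNReal.ofReal (∑' k, ∫ x, ‖f k x‖) := by
    rw [lintegral_tsum fun k => (hf k).1.enorm, ENNReal.ofReal_tsum_of_nonneg hpos hs]
    simp_rw [hlint]
  have hae : ∀ᵐ x, Summable fun k => ‖f k x‖ := by
    have : ∀ᵐ x, ∑' k, ‖f k x‖ₑ < ⊤ := by
      refine ae_lt_top' (AEMeasurable.tsum fun k => (hf k).1.enorm) ?_
      rw [htot]; exact ENNReal.ofReal_ne_top
    filter_upwards [this] with x hx
    have := ENNReal.tsum_coe_ne_top_iff_summable.1 hx.ne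
    exact NNReal.summable_coe.2 this
  have hmeas : AEStronglyMeasurable (fun x => ∑' k, f k x) := by
    refine aestronglyMeasurable_of_tendsto_ae Filter.atTop
      (f := fun n x => ∑ k ∈ Finset.range n, f k x)
      (fun n => ?_) ?_
    · exact Finset.aestronglyMeasurable_fun_sum _ fun k _ => (hf k).1
    · filter_upwards [hae] with x hx using hx.of_norm.hasSum.tendsto_sum_nat
  have hle : ∫⁻ x, ‖∑' k, f k x‖ₑ ≤ ENNReal.ofReal (∑' k, ∫ x, ‖f k x‖) := by
    rw [← htot]
    exact lintegral_mono fun x => enorm_tsum_le_tsum_enorm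
  have hsumInt : Integrable (fun x => ∑' k, f k x) :=
    ⟨hmeas, hle.trans_lt ENNReal.ofReal_lt_top⟩
  refine ⟨hsumInt, ?_, hae⟩
  rw [← ENNReal.ofReal_le_ofReal_iff (tsum_nonneg hpos),
    ofReal_integral_norm_eq_lintegral_enorm hsumInt]
  exact hle

lemma tsum {F : ℕ → EuclideanSpace ℝ (Fin d) → ℂ} {C : ℕ → ℝ} (h : ∀ k, HasRepBound (F k) (C k))
    (hC : Summable C) : HasRepBound (fun y => ∑' k, F k y) (∑' k, C k) := by
  choose f a γ hf ha hb hF using h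
  have hfpos : ∀ k, 0 ≤ ∫ x, ‖f k x‖ := fun k => integral_nonneg fun _ => norm_nonneg _
  have hapos : ∀ k, 0 ≤ ∑' n, ‖a k n‖ := fun k => tsum_nonneg fun _ => norm_nonneg _
  have hfs : Summable fun k => ∫ x, ‖f k x‖ :=
    hC.of_nonneg_of_le hfpos fun k => (le_add_of_nonneg_right (hapos k)).trans (hb k)
  have has : Summable fun k => ∑' n, ‖a k n‖ :=
    hC.of_nonneg_of_le hapos fun k => (le_add_of_nonneg_left (hfpos k)).trans (hb k)
  obtain ⟨hsumInt, hsumInt_le, hae⟩ := integrable_tsum hf hfs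
  have hprod : Summable fun p : ℕ × ℕ => ‖a p.1 p.2‖ :=
    (summable_prod_of_nonneg fun _ => norm_nonneg _).2 ⟨ha, has⟩
  let e := Nat.pairEquiv.symm
  refine ⟨fun x => ∑' k, f k x, fun n => a (e n).1 (e n).2, fun n => γ (e n).1 (e n).2, hsumInt,
    hprod.comp_injective e.injective, ?_, fun y => ?_⟩
  · rw [e.tsum_eq (fun p : ℕ × ℕ => ‖a p.1 p.2‖), hprod.tsum_prod]
    refine (add_le_add_left hsumInt_le _).trans ?_
    rw [← hfs.tsum_add has]
    exact (hfs.add has).tsum_le_tsum hb hC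
  · have hsum1 : HasSum (fun k => 𝓕 (f k) y) (𝓕 (fun x => ∑' k, f k x) y) := by
      have := hasSum_integral_of_summable_integral_norm
        (F := fun k (x : EuclideanSpace ℝ (Fin d)) => (𝐞 (-⟪x, y⟫) • f k x : ℂ)) (μ := volume)
        (fun k => (Real.fourierIntegral_convergent_iff y).2 (hf k)) (by simpa using hfs)
      simp only [Circle.smul_def, smul_eq_mul, tsum_mul_left] at this
      simpa only [Real.fourier_eq, Circle.smul_def, smul_eq_mul] using this
    have hp : Summable fun p : ℕ × ℕ =>
        a p.1 p.2 * Complex.exp (-2 * π * Complex.I * (⟪γ p.1 p.2, y⟫ : ℝ)) :=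
      .of_norm (by simpa only [norm_mul, norm_char, mul_one] using hprod)
    have hsum2 := hp.hasSum.prod_fiberwise fun k => (summable_char (ha k) (γ k) y).hasSum
    simp only [hF, measureFourier]
    rw [(hsum1.add hsum2).tsum_eq, ← e.tsum_eq (fun p : ℕ × ℕ =>
      a p.1 p.2 * Complex.exp (-2 * π * Complex.I * (⟪γ p.1 p.2, y⟫ : ℝ)))]

lemma zero : HasRepBound (fun _ : EuclideanSpace ℝ (Fin d) => 0) 0 := by
  simpa using const (d := d) 0

lemma add (hF : HasRepBound F C) (hG : HasRepBound G D) :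
    HasRepBound (fun y => F y + G y) (C + D) := by
  have hs (u v : ℂ) : HasSum (fun n : ℕ => if n = 0 then u else if n = 1 then v else 0)
      (u + v) := by
    have := hasSum_sum_of_ne_finset_zero (L := .unconditional _) (s := Finset.range 2)
      (f := fun n : ℕ => if n = 0 then u else if n = 1 then v else 0) (by
        intro n hn; simp only [Finset.mem_range] at hn
        rw [if_neg (by omega), if_neg (by omega)])
    simpa [Finset.sum_range_succ] using this
  have hs' : HasSum (fun n : ℕ => if n = 0 then C else if n = 1 then D else 0)
      (C + D) := by
    have := hasSum_sum_of_ne_finset_zero (L := .unconditional _) (s := Finset.range 2)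
      (f := fun n : ℕ => if n = 0 then C else if n = 1 then D else 0) (by
        intro n hn; simp only [Finset.mem_range] at hn
        rw [if_neg (by omega), if_neg (by omega)])
    simpa [Finset.sum_range_succ] using this
  have := tsum (F := fun n y => if n = 0 then F y else if n = 1 then G y else 0)
    (C := fun n => if n = 0 then C else if n = 1 then D else 0) (fun k => by
      rcases eq_or_ne k 0 with rfl | h0
      · simpa using hF
      rcases eq_or_ne k 1 with rfl | h1
      · simpa using hG
      simpa [h0, h1] using zero) hs'.summable
  rw [hs'.tsum_eq] at this
  exact this.congr fun y => ((hs (F y) (G y)).tsum_eq).symm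

lemma const_mul (c : ℂ) (hF : HasRepBound F C) : HasRepBound (fun y => c * F y) (‖c‖ * C) := by
  obtain ⟨f, a, γ, hf, ha, hb, hF⟩ := hF
  refine ⟨fun x => c * f x, fun n => c * a n, γ, hf.const_mul c, ?_, ?_, fun y => ?_⟩
  · simpa only [norm_mul] using ha.mul_left ‖c‖
  · simp only [norm_mul, tsum_mul_left, integral_const_mul, ← mul_add]
    exact mul_le_mul_of_nonneg_left hb (norm_nonneg _)
  · have : 𝓕 (fun x => c * f x) y = c * 𝓕 f y := by
      simp only [Real.fourier_eq, ← integral_const_mul]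
      congr 1; ext x
      simp only [Circle.smul_def, smul_eq_mul]; ring
    simp only [hF, measureFourier, this, mul_assoc, tsum_mul_left, mul_add]

lemma mul_char (hF : HasRepBound F C) (ρ : EuclideanSpace ℝ (Fin d)) :
    HasRepBound (fun y => Complex.exp (-2 * π * Complex.I * (⟪ρ, y⟫ : ℝ)) * F y) C := by
  obtain ⟨f, a, γ, hf, ha, hb, hF⟩ := hF
  refine ⟨fun x => f (x - ρ), a, fun n => ρ + γ n, hf.comp_sub_right ρ, ha, ?_, fun y => ?_⟩
  · rwa [integral_sub_right_eq_self (fun x => ‖f x‖) ρ]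
  · have : 𝓕 (fun x => f (x - ρ)) y =
        Complex.exp (-2 * π * Complex.I * (⟪ρ, y⟫ : ℝ)) * 𝓕 f y := by
      simp only [Real.fourier_eq, ← integral_const_mul]
      rw [← integral_sub_right_eq_self (fun x => Complex.exp (-2 * π * Complex.I * (⟪ρ, y⟫ : ℝ)) *
        𝐞 (-⟪x, y⟫) • f x) ρ]
      congr 1; ext x
      simp only [Circle.smul_def, smul_eq_mul, Real.fourierChar_apply, ← mul_assoc,
        ← Complex.exp_add, inner_sub_left]
      congr 2; push_cast; ring
    simp only [hF, measureFourier, this, mul_add, ← tsum_mul_left]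
    congr 2; ext n
    rw [inner_add_left]; push_cast
    rw [mul_add, Complex.exp_add]; ring

lemma mul_fourier {f g : EuclideanSpace ℝ (Fin d) → ℂ} (hf : Integrable f) (hg : Integrable g) :
    HasRepBound (fun y => 𝓕 f y * 𝓕 g y) ((∫ x, ‖f x‖) * ∫ x, ‖g x‖) := by
  have hconv := hf.integrable_convolution (ContinuousLinearMap.mul ℂ ℂ) hg
  have hconv' := hf.norm.integrable_convolution (ContinuousLinearMap.mul ℝ ℝ) hg.norm
  refine ((of_fourier hconv).congr fun y =>
    (Real.fourier_mul_convolution_eq hf hg y).symm).mono ?_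
  have hsumInt := integral_convolution (ContinuousLinearMap.mul ℝ ℝ) hf.norm hg.norm
  rw [ContinuousLinearMap.mul_apply'] at hsumInt
  rw [← hsumInt]
  refine integral_mono hconv.norm hconv' fun x => ?_
  simp only [convolution_def]
  exact (norm_integral_le_integral_norm _).trans (by simp)

lemma mul (hF : HasRepBound F C) (hG : HasRepBound G D) :
    HasRepBound (fun y => F y * G y) (C * D) := by
  have hF' := hF
  obtain ⟨f, a, γ, hf, ha, hb, hF⟩ := hF
  have hG' := hG
  obtain ⟨g, b, ρ, hg, hb', hD, hG⟩ := hG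
  have h1 := mul_fourier hf hg
  have h2 := tsum (fun n => ((of_fourier hf).mul_char (ρ n)).const_mul (b n))
    (hb'.mul_right _)
  have h3 := tsum (fun n => (hG'.mul_char (γ n)).const_mul (a n)) (ha.mul_right _)
  refine ((h1.add h2).add h3 |>.congr fun y => ?_).mono ?_
  · rw [hF, measureFourier, add_mul, ← tsum_mul_right]
    congr 1
    · rw [hG, measureFourier, mul_add, ← tsum_mul_left]
      congr 2; ext n; ring
    · congr 1; ext n; ring
  · rw [tsum_mul_right, tsum_mul_right, mul_comm (∑' n, ‖b n‖), ← mul_add]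
    calc _ ≤ (∫ x, ‖f x‖) * D + (∑' n, ‖a n‖) * D := by
            gcongr
      _ ≤ C * D := by
            rw [← add_mul]; exact mul_le_mul_of_nonneg_right hb hG'.nonneg

lemma conj (hF : HasRepBound F C) : HasRepBound (fun y => (starRingEnd ℂ) (F y)) C := by
  obtain ⟨f, a, γ, hf, ha, hb, hF⟩ := hF
  refine ⟨fun x => (starRingEnd ℂ) (f (-x)), fun n => (starRingEnd ℂ) (a n), fun n => - γ n,
    ?_, by simpa using ha, ?_, fun y => ?_⟩
  · exact (Complex.conjCLE : ℂ →L[ℝ] ℂ).integrable_comp hf.comp_neg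
  · simpa [integral_neg_eq_self (fun x => ‖f x‖)] using hb
  · simp only [hF, measureFourier, map_add, Complex.conj_tsum, map_mul, ← Complex.exp_conj]
    congr 1
    · simp only [Real.fourier_eq, ← integral_conj]
      rw [← integral_neg_eq_self]
      congr 1; ext x
      simp only [Circle.smul_def, smul_eq_mul, map_mul, Real.fourierChar_apply, ← Complex.exp_conj]
      simp [map_ofNat]
    · congr 1; ext n
      simp [map_ofNat]

end HasRepBound

/-- The algebra of Fourier–Stieltjes transforms of measures without singular component. -/
def wienerSubalgebra (d : ℕ) : Subalgebra ℂ (EuclideanSpace ℝ (Fin d) → ℂ) where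
  carrier := {F | ∃ C, HasRepBound F C}
  mul_mem' := fun ⟨C, hF⟩ ⟨D, hG⟩ => ⟨C * D, hF.mul hG⟩
  add_mem' := fun ⟨C, hF⟩ ⟨D, hG⟩ => ⟨C + D, hF.add hG⟩
  algebraMap_mem' := fun c => ⟨‖c‖, HasRepBound.const c⟩

/-- The algebra `wienerSubalgebra d` as a type of its own, to be endowed with the total variation
norm. -/
def WienerAlgebra (d : ℕ) : Type := wienerSubalgebra d

namespace WienerAlgebra

variable {d : ℕ}

noncomputable instance : CommRing (WienerAlgebra d) := inferInstanceAs (CommRing (wienerSubalgebra d))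

noncomputable instance : Algebra ℂ (WienerAlgebra d) :=
  inferInstanceAs (Algebra ℂ (wienerSubalgebra d))

/-- The inclusion of the Wiener algebra into the algebra of all functions. -/
noncomputable def toFun (d : ℕ) : WienerAlgebra d →ₐ[ℂ] (EuclideanSpace ℝ (Fin d) → ℂ) :=
  (wienerSubalgebra d).val

lemma toFun_injective : Function.Injective (toFun d) := Subtype.val_injective

lemma exists_bound (F : WienerAlgebra d) : ∃ C, HasRepBound (toFun d F) C := F.2

lemma exists_toFun_eq {F : EuclideanSpace ℝ (Fin d) → ℂ} {C : ℝ} (h : HasRepBound F C) :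
    ∃ X : WienerAlgebra d, toFun d X = F :=
  ⟨⟨F, C, h⟩, rfl⟩

/-- The infimum of the total variations of the measures representing `F`. -/
noncomputable def gauge (F : WienerAlgebra d) : ℝ := sInf {C | HasRepBound (toFun d F) C}

lemma gauge_le {F : WienerAlgebra d} {C : ℝ} (h : HasRepBound (toFun d F) C) : gauge F ≤ C :=
  csInf_le ⟨0, fun _ h => h.nonneg⟩ h

lemma hasRepBound_of_gauge_lt {F : WienerAlgebra d} {C : ℝ} (h : gauge F < C) :
    HasRepBound (toFun d F) C := by
  obtain ⟨D, hD, hDC⟩ := exists_lt_of_csInf_lt F.exists_bound h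
  exact HasRepBound.mono hD hDC.le

lemma gauge_nonneg (F : WienerAlgebra d) : 0 ≤ gauge F :=
  le_csInf F.exists_bound fun _ h => HasRepBound.nonneg h

lemma gauge_neg_le (F : WienerAlgebra d) : gauge (-F) ≤ gauge F := by
  refine le_of_forall_gt_imp_ge_of_dense fun C hC => gauge_le ?_
  have := (hasRepBound_of_gauge_lt hC).const_mul (-1)
  simp only [norm_neg, norm_one, one_mul] at this
  exact this.congr fun y => by simp

/-- The total variation norm on the Wiener algebra. -/
noncomputable def ringNorm (d : ℕ) : RingNorm (WienerAlgebra d) where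
  toFun := gauge
  map_zero' := le_antisymm (gauge_le (by rw [map_zero]; exact HasRepBound.zero)) (gauge_nonneg _)
  add_le' F G := by
    refine le_of_forall_pos_le_add fun ε hε => ?_
    have h := (hasRepBound_of_gauge_lt (lt_add_of_pos_right (gauge F) (half_pos hε))).add
      (hasRepBound_of_gauge_lt (lt_add_of_pos_right (gauge G) (half_pos hε)))
    exact (gauge_le (by rw [map_add]; exact h)).trans (by linarith)
  neg' F := le_antisymm (gauge_neg_le F) (by simpa using gauge_neg_le (-F))
  mul_le' F G := by
    have h : ∀ C > gauge F, ∀ D > gauge G, gauge (F * G) ≤ C * D := fun C hC D hD =>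
      gauge_le (by
        rw [map_mul]
        exact (hasRepBound_of_gauge_lt hC).mul (hasRepBound_of_gauge_lt hD))
    exact le_mul_of_forall_lt₀ h
  eq_zero_of_map_eq_zero' F hF := by
    refine toFun_injective ?_
    ext y
    rw [map_zero, Pi.zero_apply, ← norm_le_zero_iff]
    refine le_of_forall_gt_imp_ge_of_dense fun C hC => ?_
    exact (hasRepBound_of_gauge_lt (F := F) (by rwa [show gauge F = 0 from hF])).norm_le y

noncomputable instance : NormedCommRing (WienerAlgebra d) :=
  { (ringNorm d).toNormedRing with mul_comm := mul_comm }

lemma norm_le {F : WienerAlgebra d} {C : ℝ} (h : HasRepBound (toFun d F) C) : ‖F‖ ≤ C :=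
  gauge_le h

lemma hasRepBound_of_norm_lt {F : WienerAlgebra d} {C : ℝ} (h : ‖F‖ < C) :
    HasRepBound (toFun d F) C :=
  hasRepBound_of_gauge_lt h

noncomputable instance : NormedAlgebra ℂ (WienerAlgebra d) :=
  { (inferInstance : Algebra ℂ (WienerAlgebra d)) with
    norm_smul_le := fun c F => by
      refine le_of_forall_gt_imp_ge_of_dense fun D hD => ?_
      have h : ∀ C > ‖F‖, ‖c • F‖ ≤ ‖c‖ * C := fun C hC => norm_le (by
        rw [map_smul]
        exact (hasRepBound_of_norm_lt hC).const_mul c)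
      refine le_trans ?_ hD.le
      exact le_mul_of_forall_lt₀ fun u hu C hC =>
        (h C hC).trans (mul_le_mul_of_nonneg_right hu.le ((norm_nonneg _).trans hC.le)) }

lemma norm_apply_le (F : WienerAlgebra d) (y : EuclideanSpace ℝ (Fin d)) : ‖toFun d F y‖ ≤ ‖F‖ :=
  le_of_forall_gt_imp_ge_of_dense fun _ hC => (hasRepBound_of_norm_lt hC).norm_le y

lemma summable_apply {F : ℕ → WienerAlgebra d} (hF : Summable (‖F ·‖))
    (y : EuclideanSpace ℝ (Fin d)) : Summable fun k => toFun d (F k) y :=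
  .of_norm_bounded hF fun k => norm_apply_le (F k) y

instance : CompleteSpace (WienerAlgebra d) := by
  refine NormedAddCommGroup.completeSpace_of_summable_imp_tendsto fun u hu => ?_
  have hgeom : Summable fun k : ℕ => (1 / 2 : ℝ) ^ k := summable_geometric_two
  have hC : Summable fun k => ‖u k‖ + (1 / 2 : ℝ) ^ k := hu.add hgeom
  have hb : ∀ k, HasRepBound (toFun d (u k)) (‖u k‖ + (1 / 2 : ℝ) ^ k) := fun k =>
    hasRepBound_of_norm_lt (lt_add_of_pos_right _ (by positivity))
  obtain ⟨S, hS⟩ := exists_toFun_eq (HasRepBound.tsum hb hC)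
  refine ⟨S, tendsto_iff_norm_sub_tendsto_zero.2 ?_⟩
  refine squeeze_zero (fun _ => norm_nonneg _) (fun n => ?_)
    (tendsto_sum_nat_add fun k => ‖u k‖ + (1 / 2 : ℝ) ^ k)
  rw [norm_sub_rev]
  refine norm_le ((HasRepBound.tsum (fun k => hb (k + n)) ((summable_nat_add_iff n).2 hC)).congr
    fun y => ?_)
  have := (summable_apply hu y).sum_add_tsum_nat_add n
  rw [map_sub, map_sum, Pi.sub_apply, Finset.sum_apply, hS, sub_eq_iff_eq_add', this]

lemma toFun_tsum {F : ℕ → WienerAlgebra d} (hF : Summable (‖F ·‖))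
    (y : EuclideanSpace ℝ (Fin d)) : toFun d (∑' k, F k) y = ∑' k, toFun d (F k) y := by
  let L : WienerAlgebra d →L[ℂ] ℂ := LinearMap.mkContinuous
    ((LinearMap.proj y).comp (toFun d).toLinearMap) 1 (fun F => by
      simpa using norm_apply_le F y)
  exact L.map_tsum hF.of_norm

end WienerAlgebra

open scoped ContDiff

namespace WienerAlgebra

variable {d : ℕ}

instance : NormOneClass (WienerAlgebra d) where
  norm_one := le_antisymm
    (norm_le (by simpa using (HasRepBound.const (d := d) 1).congr (G := 1) fun _ => rfl))
    (by simpa using norm_apply_le (1 : WienerAlgebra d) 0)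

end WienerAlgebra

lemma exists_norm_pow_le_of_isUnit {A : Type*} [NormedCommRing A] [NormedAlgebra ℂ A]
    [CompleteSpace A] {X : A} {ρ ρ' : ℝ} (hρ : 0 ≤ ρ)
    (hX : ∀ z : ℂ, ρ < ‖z‖ → IsUnit (algebraMap ℂ A z - X)) (hρρ' : ρ < ρ') :
    ∃ C, ∀ n : ℕ, ‖X ^ n‖ ≤ C * ρ' ^ n := by
  have hrad : spectralRadius ℂ X ≤ ENNReal.ofReal ρ := by
    refine iSup₂_le fun z hz => ?_
    have : ‖z‖ ≤ ρ := not_lt.1 fun h => hz (hX z h)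
    rw [← enorm_eq_nnnorm, ← ofReal_norm]
    exact ENNReal.ofReal_le_ofReal this
  have hlt : spectralRadius ℂ X < ENNReal.ofReal ρ' :=
    hrad.trans_lt ((ENNReal.ofReal_lt_ofReal_iff (hρ.trans_lt hρρ')).2 hρρ')
  have hev := (spectrum.pow_nnnorm_pow_one_div_tendsto_nhds_spectralRadius X).eventually_lt_const hlt
  have hO : (fun n : ℕ => X ^ n) =O[Filter.atTop] fun n : ℕ => ρ' ^ n := by
    refine Asymptotics.IsBigO.of_bound 1 ?_
    filter_upwards [hev, Filter.eventually_gt_atTop 0] with n hn hn0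
    have hpos : (0 : ℝ) < n := by exact_mod_cast hn0
    have h1 : (‖X ^ n‖₊ : ENNReal) ≤ ENNReal.ofReal (ρ' ^ n) := by
      have := ENNReal.rpow_le_rpow hn.le hpos.le
      rwa [← ENNReal.rpow_mul, one_div_mul_cancel hpos.ne', ENNReal.rpow_one,
        ENNReal.rpow_natCast, ← ENNReal.ofReal_pow (hρ.trans hρρ'.le)] at this
    have h2 : ‖X ^ n‖ ≤ ρ' ^ n := by
      have h3 : 0 ≤ ρ' ^ n := pow_nonneg (hρ.trans hρρ'.le) n
      rw [← enorm_eq_nnnorm, ← ofReal_norm] at h1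
      exact (ENNReal.ofReal_le_ofReal_iff h3).1 h1
    rw [one_mul]
    exact h2.trans (le_abs_self _)
  obtain ⟨C, -, hC⟩ := Asymptotics.bound_of_isBigO_nat_atTop hO
  refine ⟨C, fun n => (hC (pow_pos (hρ.trans_lt hρρ') n).ne').trans_eq ?_⟩
  rw [Real.norm_of_nonneg (pow_nonneg (hρ.trans hρρ'.le) n)]

lemma norm_add_pow_le {A : Type*} [NormedCommRing A] [NormOneClass A] {X Y : A} {C ρ ε : ℝ}
    (hX : ∀ n : ℕ, ‖X ^ n‖ ≤ C * ρ ^ n) (hY : ‖Y‖ ≤ ε) (n : ℕ) :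
    ‖(X + Y) ^ n‖ ≤ C * (ρ + ε) ^ n := by
  rw [add_pow, add_pow, Finset.mul_sum]
  refine norm_sum_le_of_le _ fun m _ => ?_
  rw [← nsmul_eq_mul']
  refine (norm_nsmul_le).trans ?_
  rw [mul_comm, ← mul_assoc C, ← mul_assoc C]
  refine mul_le_mul_of_nonneg_right ?_ (Nat.cast_nonneg _)
  refine (norm_mul_le _ _).trans (mul_le_mul (hX m) ?_ (norm_nonneg _) ((norm_nonneg _).trans (hX m)))
  exact (norm_pow_le _ _).trans (pow_le_pow_left₀ (norm_nonneg _) hY _)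

namespace WienerAlgebra

variable {d : ℕ}

/-- A real two-variable power series can be evaluated in the Wiener algebra at elements whose
powers decay fast enough. -/
lemma exists_powerSeries {X Y : WienerAlgebra d} {C ρ r M : ℝ} (hρ : 0 ≤ ρ)
    (hX : ∀ n : ℕ, ‖X ^ n‖ ≤ C * ρ ^ n) (hY : ∀ n : ℕ, ‖Y ^ n‖ ≤ C * ρ ^ n)
    (p : FormalMultilinearSeries ℝ ℂ ℂ) (hp : ∀ n, ‖p n‖ * r ^ n ≤ M) (hr : 2 * ρ < r) :
    ∃ H : WienerAlgebra d, ∀ (y : EuclideanSpace ℝ (Fin d)) (s t : ℝ),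
      toFun d X y = s → toFun d Y y = t →
      toFun d H y = ∑' n, p n fun _ => (s : ℂ) + t * Complex.I := by
  have hr0 : 0 < r := (by positivity : (0 : ℝ) ≤ 2 * ρ).trans_lt hr
  let Q : ℕ → WienerAlgebra d := fun n => ∑ S : Finset (Fin n),
    (p n (S.piecewise (fun _ => (1 : ℂ)) fun _ => Complex.I)) • (X ^ S.card * Y ^ (n - S.card))
  have hQ : ∀ n, ‖Q n‖ ≤ (C * C * M) * (2 * ρ / r) ^ n := by
    intro n
    have hterm : ∀ S ∈ (Finset.univ : Finset (Finset (Fin n))),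
        ‖(p n (S.piecewise (fun _ => (1 : ℂ)) fun _ => Complex.I)) •
          (X ^ S.card * Y ^ (n - S.card))‖ ≤ ‖p n‖ * (C * C * ρ ^ n) := by
      intro S _
      have hS : S.card ≤ n := by simpa using S.card_le_univ
      refine (norm_smul_le _ _).trans (mul_le_mul ?_ ?_ (norm_nonneg _) (norm_nonneg _))
      · refine ((p n).le_opNorm _).trans ?_
        rw [Finset.prod_eq_one, mul_one]
        intro i _
        by_cases hi : i ∈ S <;> simp [hi]
      · refine (norm_mul_le _ _).trans ((mul_le_mul (hX _) (hY _) (norm_nonneg _)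
          ((norm_nonneg _).trans (hX _))).trans_eq ?_)
        rw [← pow_mul_pow_sub ρ hS]; ring
    refine (norm_sum_le_of_le _ hterm).trans ?_
    rw [Finset.sum_const, Finset.card_univ, Fintype.card_finset, Fintype.card_fin, nsmul_eq_mul]
    have h1 : ‖p n‖ ≤ M / r ^ n := (le_div_iff₀ (pow_pos hr0 n)).2 (hp n)
    calc ((2 ^ n : ℕ) : ℝ) * (‖p n‖ * (C * C * ρ ^ n))
        = ‖p n‖ * ((C * C) * (2 * ρ) ^ n) := by push_cast; rw [mul_pow]; ring
      _ ≤ (M / r ^ n) * ((C * C) * (2 * ρ) ^ n) :=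
          mul_le_mul_of_nonneg_right h1 (mul_nonneg (mul_self_nonneg C) (by positivity))
      _ = _ := by rw [div_pow]; ring
  have hsum : Summable (‖Q ·‖) := by
    refine Summable.of_nonneg_of_le (fun _ => norm_nonneg _) hQ
      ((summable_geometric_of_lt_one (by positivity) ?_).mul_left _)
    rwa [div_lt_one hr0]
  refine ⟨∑' n, Q n, fun y s t hs ht => ?_⟩
  rw [toFun_tsum hsum]
  congr 1; ext n
  have hexp : (fun _ : Fin n => (s : ℂ) + t * Complex.I) =
      (fun _ => s • (1 : ℂ)) + fun _ => t • Complex.I := by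
    ext i; simp
  have hpw : ∀ S : Finset (Fin n),
      p n (S.piecewise (fun _ => s • (1 : ℂ)) fun _ => t • Complex.I) =
      (s ^ S.card * t ^ (n - S.card)) • p n (S.piecewise (fun _ => (1 : ℂ)) fun _ => Complex.I) := by
    intro S
    have : (S.piecewise (fun _ => s • (1 : ℂ)) fun _ => t • Complex.I) =
        fun i => (S.piecewise (fun _ => s) (fun _ => t) i) •
          (S.piecewise (fun _ => (1 : ℂ)) (fun _ => Complex.I) i) := by
      ext i
      by_cases hi : i ∈ S <;> simp [hi]
    rw [this, ContinuousMultilinearMap.map_smul_univ]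
    congr 1
    rw [Finset.prod_piecewise]
    simp [Finset.card_sdiff, Finset.card_univ]
  rw [hexp, ContinuousMultilinearMap.map_add_univ, map_sum, Finset.sum_apply]
  refine Finset.sum_congr rfl fun S _ => ?_
  rw [hpw, map_smul, map_mul, map_pow, map_pow, Pi.smul_apply, Pi.mul_apply, Pi.pow_apply,
    Pi.pow_apply, hs, ht, smul_eq_mul, Complex.real_smul]
  push_cast; ring

/-- A real function is regular if all smooth functions operate on it within the Wiener algebra. -/
def IsRegular (x : EuclideanSpace ℝ (Fin d) → ℝ) : Prop :=
  ∀ φ : ℝ → ℂ, ContDiff ℝ ∞ φ → ∃ X : WienerAlgebra d, ∀ y, toFun d X y = φ (x y)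

lemma IsRegular.exists_localization {x : EuclideanSpace ℝ (Fin d) → ℝ} (hx : IsRegular x) (c : ℝ)
    {δ : ℝ} (hδ : 0 < δ) {X₁ : WienerAlgebra d} (hX₁ : ‖X₁‖ ≤ δ) :
    ∃ (X : WienerAlgebra d) (C : ℝ), (∀ n : ℕ, ‖X ^ n‖ ≤ C * (4 * δ) ^ n) ∧
      ∀ y, |x y - c| ≤ δ → toFun d X y = (x y - c : ℝ) + toFun d X₁ y := by
  let b : ContDiffBump (0 : ℝ) := ⟨δ, 2 * δ, hδ, by linarith⟩
  let θ : ℝ → ℝ := fun t => (t - c) * b (t - c)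
  have hθ : ContDiff ℝ ∞ θ := by
    have hsub : ContDiff ℝ ∞ fun t : ℝ => t - c := by fun_prop
    exact hsub.mul (b.contDiff.comp hsub)
  have hθ_le : ∀ t, |θ t| ≤ 2 * δ := by
    intro t
    rw [abs_mul, abs_of_nonneg b.nonneg]
    by_cases ht : |t - c| ≤ 2 * δ
    · exact (mul_le_mul ht b.le_one b.nonneg (by positivity)).trans_eq (mul_one _)
    · rw [b.zero_of_le_dist (by simpa using (not_le.1 ht).le), mul_zero]
      positivity
  have hθ_eq : ∀ t, |t - c| ≤ δ → θ t = t - c := by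
    intro t ht
    simp only [θ]
    rw [b.one_of_mem_closedBall (by simpa using ht), mul_one]
  obtain ⟨X₀, hX₀⟩ := hx (fun t => (θ t : ℂ)) (Complex.ofRealCLM.contDiff.comp hθ)
  have hunit : ∀ z : ℂ, 2 * δ < ‖z‖ → IsUnit (algebraMap ℂ (WienerAlgebra d) z - X₀) := by
    intro z hz
    have hne : ∀ t, z - (θ t : ℂ) ≠ 0 := by
      intro t h
      rw [sub_eq_zero.1 h, Complex.norm_real, Real.norm_eq_abs] at hz
      exact absurd (hθ_le t) (not_le.2 hz)
    obtain ⟨Z, hZ⟩ := hx (fun t => (z - (θ t : ℂ))⁻¹)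
      ((contDiff_const.sub (Complex.ofRealCLM.contDiff.comp hθ)).inv hne)
    refine IsUnit.of_mul_eq_one Z (toFun_injective ?_)
    ext y
    rw [map_mul, map_sub, map_one, AlgHom.commutes, Pi.mul_apply, Pi.sub_apply, hZ, hX₀]
    simpa using mul_inv_cancel₀ (hne (x y))
  obtain ⟨C, hC⟩ := exists_norm_pow_le_of_isUnit (by positivity) hunit
    (show 2 * δ < 3 * δ by linarith)
  refine ⟨X₀ + X₁, C, fun n => ?_, fun y hy => ?_⟩
  · convert norm_add_pow_le hC hX₁ n using 3
    ring
  · rw [map_add, Pi.add_apply, hX₀, hθ_eq _ hy]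

lemma exists_local_comp {h : ℂ → ℂ} {c : ℂ} (hh : AnalyticAt ℝ h c) :
    ∃ δ > 0, ∀ (x₀ x₁ : EuclideanSpace ℝ (Fin d) → ℝ), IsRegular x₀ → IsRegular x₁ →
      ∀ X₀ X₁ : WienerAlgebra d, ‖X₀‖ ≤ δ → ‖X₁‖ ≤ δ →
      ∃ H : WienerAlgebra d, ∀ (y : EuclideanSpace ℝ (Fin d)) (s t : ℝ),
        toFun d X₀ y = s → toFun d X₁ y = t → |x₀ y - c.re| ≤ δ → |x₁ y - c.im| ≤ δ →
        toFun d H y = h ((x₀ y + s : ℝ) + (x₁ y + t : ℝ) * Complex.I) := by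
  obtain ⟨p, R, hpR⟩ := hh
  obtain ⟨r, hr0, hrR⟩ := ENNReal.lt_iff_exists_nnreal_btwn.1 hpR.r_pos
  have hr0 : (0 : ℝ) < r := by exact_mod_cast hr0
  obtain ⟨M, -, hM⟩ := p.norm_mul_pow_le_of_lt_radius (hrR.trans_le hpR.r_le)
  refine ⟨r / 16, by positivity, fun x₀ x₁ hx₀ hx₁ X₀ X₁ hX₀ hX₁ => ?_⟩
  have hδ : (0 : ℝ) < r / 16 := by positivity
  obtain ⟨X, C, hC, hX⟩ := hx₀.exists_localization c.re hδ hX₀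
  obtain ⟨Y, D, hD, hY⟩ := hx₁.exists_localization c.im hδ hX₁
  obtain ⟨H, hH⟩ := exists_powerSeries (X := X) (Y := Y) (C := max C D) (ρ := 4 * (r / 16)) (r := r)
    (M := M) (by positivity)
    (fun n => (hC n).trans (mul_le_mul_of_nonneg_right (le_max_left _ _) (by positivity)))
    (fun n => (hD n).trans (mul_le_mul_of_nonneg_right (le_max_right _ _) (by positivity)))
    p hM (by linarith)
  refine ⟨H, fun y s t hs ht h0 h1 => ?_⟩
  have hs' : |s| ≤ r / 16 := by
    have := norm_apply_le X₀ y
    rw [hs, Complex.norm_real, Real.norm_eq_abs] at this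
    exact this.trans hX₀
  have ht' : |t| ≤ r / 16 := by
    have := norm_apply_le X₁ y
    rw [ht, Complex.norm_real, Real.norm_eq_abs] at this
    exact this.trans hX₁
  rw [hH y (x₀ y - c.re + s) (x₁ y - c.im + t) (by rw [hX y h0, hs]; push_cast; ring)
    (by rw [hY y h1, ht]; push_cast; ring)]
  have hmem : (((x₀ y - c.re + s : ℝ) : ℂ) + (x₁ y - c.im + t : ℝ) * Complex.I) ∈
      Metric.eball (0 : ℂ) R := by
    rw [Metric.mem_eball, edist_zero_right]
    refine lt_of_le_of_lt ?_ hrR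
    rw [← ofReal_norm, ← ENNReal.ofReal_coe_nnreal]
    refine ENNReal.ofReal_le_ofReal ((norm_add_le _ _).trans ?_)
    rw [norm_mul, Complex.norm_I, mul_one, Complex.norm_real, Complex.norm_real, Real.norm_eq_abs,
      Real.norm_eq_abs]
    have := abs_add_le (x₀ y - c.re) s
    have := abs_add_le (x₁ y - c.im) t
    linarith
  rw [(hpR.hasSum hmem).tsum_eq]
  congr 1
  apply Complex.ext <;> simp <;> ring

/-- Gluing of local solutions along a finite family of cutoff functions. -/
lemma exists_glue {ι : Type*} (s : Finset ι) (u : EuclideanSpace ℝ (Fin d) → ℂ)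
    (k : ι → WienerAlgebra d)
    (hk : ∀ i ∈ s, ∃ H : WienerAlgebra d, ∀ y, toFun d H y = toFun d (k i) y * u y) :
    ∃ H : WienerAlgebra d, ∀ y, toFun d H y = (1 - ∏ i ∈ s, (1 - toFun d (k i) y)) * u y := by
  classical
  induction s using Finset.induction_on with
  | empty => exact ⟨0, fun y => by simp⟩
  | insert i s hi ih =>
    obtain ⟨H, hH⟩ := ih fun j hj => hk j (Finset.mem_insert_of_mem hj)
    obtain ⟨G, hG⟩ := hk i (Finset.mem_insert_self _ _)
    refine ⟨H + (∏ j ∈ s, (1 - k j)) * G, fun y => ?_⟩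
    rw [Finset.prod_insert hi, map_add, map_mul, map_prod, Pi.add_apply, Pi.mul_apply,
      Finset.prod_apply, hH, hG]
    simp only [map_sub, map_one, Pi.sub_apply, Pi.one_apply]
    ring

end WienerAlgebra

open scoped SchwartzMap Topology

namespace ContDiffBump

lemma exists_norm_iteratedFDeriv_sub_one_le {E : Type*} [NormedAddCommGroup E]
    [InnerProductSpace ℝ E] [FiniteDimensional ℝ E] (b : ContDiffBump (0 : E)) (i : ℕ) :
    ∃ C, ∀ x, ‖iteratedFDeriv ℝ i (fun x => b x - 1) x‖ ≤ C := by
  have hb : ContDiff ℝ i b := b.contDiff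
  obtain ⟨C, hC⟩ := (hb.continuous_iteratedFDeriv le_rfl).bounded_above_of_compact_support
    (b.hasCompactSupport.iteratedFDeriv i)
  refine ⟨C + 1, fun x => ?_⟩
  rw [show (fun x => b x - 1) = (b : E → ℝ) - fun _ : E => (1 : ℝ) from rfl,
    iteratedFDeriv_sub_apply hb.contDiffAt contDiffAt_const]
  refine (norm_sub_le _ _).trans (add_le_add (hC x) ?_)
  rcases eq_or_ne i 0 with rfl | hi
  · simp
  · simp [iteratedFDeriv_const_of_ne hi]

end ContDiffBump

namespace SchwartzMap

variable {E : Type*} [NormedAddCommGroup E] [InnerProductSpace ℝ E] [FiniteDimensional ℝ E]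

/-- Compactly supported functions are dense in the Schwartz space. -/
lemma exists_tendsto_hasCompactSupport (u : 𝓢(E, ℂ)) :
    ∃ v : ℕ → 𝓢(E, ℂ), (∀ m, HasCompactSupport (v m)) ∧ Filter.Tendsto v Filter.atTop (𝓝 u) := by
  let b : ContDiffBump (0 : E) := ⟨1, 2, one_pos, one_lt_two⟩
  let r : ℕ → ℝ := fun m => 1 / ((m : ℝ) + 1)
  have hr0 : ∀ m, 0 < r m := fun m => Nat.one_div_pos_of_nat
  have hr1 : ∀ m, r m ≤ 1 := fun m => by
    simpa [r] using inv_le_one_of_one_le₀ (by linarith [Nat.cast_nonneg (α := ℝ) m])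
  have hsupp : ∀ m, HasCompactSupport fun x => b (r m • x) • u x := fun m =>
    (b.hasCompactSupport.comp_smul (hr0 m).ne').smul_right
  have hsmooth : ∀ m, ContDiff ℝ ∞ fun x => b (r m • x) • u x := fun m =>
    (b.contDiff.comp (contDiff_const_smul (r m))).smul (u.smooth ⊤)
  refine ⟨fun m => (hsupp m).toSchwartzMap (hsmooth m), hsupp, ?_⟩
  choose C hC using b.exists_norm_iteratedFDeriv_sub_one_le
  rw [(schwartz_withSeminorms ℝ E ℂ).tendsto_nhds]
  rintro ⟨k, n⟩ ε hε
  let M : ℝ := ∑ i ∈ Finset.range (n + 1), (n.choose i : ℝ) * C i *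
    SchwartzMap.seminorm ℝ (k + 1) (n - i) u
  have hC0 : ∀ i, 0 ≤ C i := fun i => (norm_nonneg _).trans (hC i 0)
  have hM : 0 ≤ M := Finset.sum_nonneg fun i _ => mul_nonneg (mul_nonneg (by positivity) (hC0 i))
    (apply_nonneg _ _)
  have hbound : ∀ m, SchwartzMap.seminorm ℝ k n
      ((hsupp m).toSchwartzMap (hsmooth m) - u) ≤ r m * M := by
    intro m
    refine SchwartzMap.seminorm_le_bound ℝ k n _ (mul_nonneg (hr0 m).le hM) fun x => ?_
    have hcoe : (((hsupp m).toSchwartzMap (hsmooth m) - u : 𝓢(E, ℂ)) : E → ℂ) =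
        fun x => (b (r m • x) - 1) • u x := by
      ext x
      simp [sub_mul]
    rw [hcoe]
    by_cases hx : ‖r m • x‖ < 1
    · have hzero : (fun x => (b (r m • x) - 1) • u x) =ᶠ[𝓝 x] fun _ => 0 := by
        have : ∀ᶠ z in 𝓝 x, ‖r m • z‖ < 1 :=
          (by fun_prop : Continuous fun z : E => ‖r m • z‖).continuousAt.eventually_lt_const hx
        filter_upwards [this] with z hz
        rw [b.one_of_mem_closedBall (by simpa using hz.le), sub_self, zero_smul]
      have := (hzero.iteratedFDeriv ℝ n).eq_of_nhds
      rw [this]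
      simpa using mul_nonneg (hr0 m).le hM
    · have hx1 : 1 ≤ r m * ‖x‖ := by
        rw [norm_smul, Real.norm_of_nonneg (hr0 m).le] at hx
        exact not_lt.1 hx
      have hderiv : ∀ i, ‖iteratedFDeriv ℝ i (fun x => b (r m • x) - 1) x‖ ≤ C i := by
        intro i
        have hs : ContDiff ℝ i fun x => b x - 1 := b.contDiff.sub contDiff_const
        rw [iteratedFDeriv_comp_const_smul (f := fun x => b x - 1) (r m) hs, norm_smul, norm_pow,
          Real.norm_of_nonneg (hr0 m).le]
        exact (mul_le_of_le_one_left (norm_nonneg _) (pow_le_one₀ (hr0 m).le (hr1 m))).trans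
          (hC i _)
      have hb : ContDiff ℝ ∞ fun x => b (r m • x) - 1 :=
        (b.contDiff.comp (contDiff_const_smul (r m))).sub contDiff_const
      have hleib := norm_iteratedFDeriv_smul_le hb (u.smooth ⊤) x (n := n) (mod_cast le_top)
      calc ‖x‖ ^ k * ‖iteratedFDeriv ℝ n (fun x => (b (r m • x) - 1) • u x) x‖
          ≤ (r m * ‖x‖) * (‖x‖ ^ k * ‖iteratedFDeriv ℝ n (fun x => (b (r m • x) - 1) • u x) x‖) :=
            le_mul_of_one_le_left (by positivity) hx1
        _ = r m * (‖x‖ ^ (k + 1) * ‖iteratedFDeriv ℝ n (fun x => (b (r m • x) - 1) • u x) x‖) := by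
            ring
        _ ≤ r m * M := by
            refine mul_le_mul_of_nonneg_left ?_ (hr0 m).le
            refine (mul_le_mul_of_nonneg_left hleib (by positivity)).trans ?_
            rw [Finset.mul_sum]
            refine Finset.sum_le_sum fun i _ => ?_
            calc ‖x‖ ^ (k + 1) * (n.choose i * ‖iteratedFDeriv ℝ i (fun x => b (r m • x) - 1) x‖ *
                    ‖iteratedFDeriv ℝ (n - i) u x‖)
                = n.choose i * ‖iteratedFDeriv ℝ i (fun x => b (r m • x) - 1) x‖ *
                    (‖x‖ ^ (k + 1) * ‖iteratedFDeriv ℝ (n - i) u x‖) := by ring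
              _ ≤ n.choose i * C i * SchwartzMap.seminorm ℝ (k + 1) (n - i) u := by
                  gcongr
                  · exact mul_nonneg (Nat.cast_nonneg _) (hC0 i)
                  · exact hderiv i
                  · exact SchwartzMap.le_seminorm ℝ (k + 1) (n - i) u x
  have hlim : Filter.Tendsto (fun m => r m * M) Filter.atTop (𝓝 0) := by
    simpa [r] using (tendsto_one_div_add_atTop_nhds_zero_nat (𝕜 := ℝ)).mul_const M
  filter_upwards [hlim.eventually_lt_const hε] with m hm
  exact (hbound m).trans_lt hm

variable [MeasurableSpace E] [BorelSpace E]

/-- Functions with compactly supported smooth Fourier transform are dense in `L¹`. -/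
lemma exists_hasCompactSupport_fourier_integral_sub_le {f : E → ℂ} (hf : Integrable f) {ε : ℝ}
    (hε : 0 < ε) : ∃ g : 𝓢(E, ℂ), HasCompactSupport (𝓕 g : 𝓢(E, ℂ)) ∧ ∫ x, ‖f x - g x‖ ≤ ε := by
  obtain ⟨g₁, hg₁, hg₁', hfg⟩ := (memLp_one_iff_integrable.2 hf).exist_eLpNorm_sub_le
    ENNReal.one_ne_top le_rfl (half_pos hε)
  let G : 𝓢(E, ℂ) := hg₁.toSchwartzMap hg₁'
  obtain ⟨v, hv, hvlim⟩ := exists_tendsto_hasCompactSupport (𝓕 G : 𝓢(E, ℂ))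
  have hT : Continuous fun w : 𝓢(E, ℂ) => (𝓕⁻ w - G : 𝓢(E, ℂ)).toLp 1 (volume : Measure E) :=
    continuous_toLp.comp ((ContinuousFourierInv.continuous_fourierInv).sub continuous_const)
  have hlim := ((hT.tendsto _).comp hvlim).norm
  rw [FourierTransform.fourierInv_fourier_eq, sub_self] at hlim
  have h0 : ‖(0 : 𝓢(E, ℂ)).toLp 1 (volume : Measure E)‖ = 0 := by
    rw [SchwartzMap.norm_toLp_one]; simp
  rw [h0] at hlim
  obtain ⟨m, hm⟩ := (hlim.eventually_lt_const (half_pos hε)).exists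
  refine ⟨𝓕⁻ (v m), ?_, ?_⟩
  · rw [FourierTransform.fourier_fourierInv_eq]
    exact hv m
  · simp only [Function.comp_apply] at hm
    rw [SchwartzMap.norm_toLp_one] at hm
    have hI : Integrable fun x => f x - G x := hf.sub G.integrable
    have h1 : ∫ x, ‖f x - G x‖ ≤ ε / 2 := by
      rw [eLpNorm_one_eq_lintegral_enorm] at hfg
      rw [integral_norm_eq_lintegral_enorm hI.aestronglyMeasurable]
      exact ENNReal.toReal_le_of_le_ofReal (half_pos hε).le hfg
    calc ∫ x, ‖f x - (𝓕⁻ (v m) : 𝓢(E, ℂ)) x‖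
        ≤ ∫ x, (‖f x - G x‖ + ‖(𝓕⁻ (v m) - G : 𝓢(E, ℂ)) x‖) := by
          refine integral_mono (hf.sub (SchwartzMap.integrable _)).norm
            (hI.norm.add (SchwartzMap.integrable _).norm) fun x => ?_
          have := norm_sub_le (f x - G x) ((𝓕⁻ (v m) - G : 𝓢(E, ℂ)) x)
          simpa using this
      _ ≤ ε / 2 + ε / 2 := by
          rw [integral_add hI.norm (SchwartzMap.integrable _).norm]
          exact add_le_add h1 hm.le
      _ = ε := add_halves ε

end SchwartzMap

/-- Smooth compactly supported functions are Fourier transforms of integrable functions. -/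
lemma HasRepBound.of_hasCompactSupport {d : ℕ} {u : EuclideanSpace ℝ (Fin d) → ℂ}
    (hu : HasCompactSupport u) (hu' : ContDiff ℝ ∞ u) : ∃ C, HasRepBound u C := by
  let U : 𝓢(EuclideanSpace ℝ (Fin d), ℂ) := hu.toSchwartzMap hu'
  refine ⟨_, (HasRepBound.of_fourier (SchwartzMap.integrable (𝓕⁻ U))).congr fun y => ?_⟩
  rw [← SchwartzMap.fourier_coe, FourierTransform.fourier_fourierInv_eq]
  rfl

lemma norm_fourierCoeffOn_zero_one_le {f : ℝ → ℂ} {M : ℝ} (hM : ∀ x ∈ Set.Icc (0 : ℝ) 1, ‖f x‖ ≤ M)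
    (n : ℤ) : ‖fourierCoeffOn (zero_lt_one : (0 : ℝ) < 1) f n‖ ≤ M := by
  rw [fourierCoeffOn_eq_integral, norm_smul]
  have := intervalIntegral.norm_integral_le_of_norm_le_const (a := (0 : ℝ)) (b := 1) (C := M)
    (f := fun x : ℝ => fourier (-n) (x : AddCircle ((1 : ℝ) - 0)) • f x) fun x hx => by
      rw [Set.uIoc_of_le zero_le_one] at hx
      rw [norm_smul, fourier_apply, Circle.norm_coe, one_mul]
      exact hM x ⟨hx.1.le, hx.2⟩
  simpa using this

lemma norm_fourierCoeffOn_zero_one_mul_pow_le {f : ℝ → ℂ} (hf : ContDiff ℝ ∞ f)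
    (hend : ∀ j, iteratedDeriv j f 0 = iteratedDeriv j f 1) (q : ℕ) {M : ℝ}
    (hM : ∀ x ∈ Set.Icc (0 : ℝ) 1, ‖iteratedDeriv q f x‖ ≤ M) (n : ℤ) :
    ‖fourierCoeffOn (zero_lt_one : (0 : ℝ) < 1) f n‖ * |(n : ℝ)| ^ q ≤ M := by
  induction q generalizing f with
  | zero => simpa using norm_fourierCoeffOn_zero_one_le (by simpa using hM) n
  | succ q ih =>
    rcases eq_or_ne n 0 with rfl | hn
    · simpa using (norm_nonneg _).trans (hM 0 (by simp))
    have hf' : ContDiff ℝ ∞ (deriv f) := (contDiff_infty_iff_deriv.1 hf).2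
    have hstep := fourierCoeffOn_of_hasDerivAt (zero_lt_one : (0 : ℝ) < 1) (f := f) (f' := deriv f) hn
      (fun x _ => (hf.differentiable (by simp) x).hasDerivAt)
      (hf'.continuous.intervalIntegrable _ _)
    have h01 : f 1 - f 0 = 0 := by simpa [sub_eq_zero] using (hend 0).symm
    have hn' : (0 : ℝ) < |(n : ℝ)| := abs_pos.2 (by exact_mod_cast hn)
    have hle : ‖fourierCoeffOn (zero_lt_one : (0 : ℝ) < 1) f n‖ * |(n : ℝ)| ≤
        ‖fourierCoeffOn (zero_lt_one : (0 : ℝ) < 1) (deriv f) n‖ := by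
      rw [hstep, h01, mul_zero, zero_sub, norm_mul, norm_neg]
      simp only [Complex.ofReal_one, Complex.ofReal_zero, sub_zero, one_mul, norm_div, norm_one,
        norm_mul, norm_neg, Complex.norm_I, Complex.norm_ofNat, Complex.norm_real,
        Complex.norm_intCast, mul_one, Real.norm_eq_abs, abs_of_pos Real.pi_pos]
      rw [mul_right_comm, div_mul_eq_mul_div, one_mul, mul_comm (2 * π), div_mul_cancel_left₀ hn'.ne']
      refine mul_le_of_le_one_left (norm_nonneg _) (inv_le_one_of_one_le₀ ?_)
      linarith [Real.pi_gt_three]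
    have := ih hf' (fun j => by simpa only [← iteratedDeriv_succ'] using hend (j + 1))
      (by simpa only [← iteratedDeriv_succ'] using hM)
    calc _ = ‖fourierCoeffOn (zero_lt_one : (0 : ℝ) < 1) f n‖ * |(n : ℝ)| * |(n : ℝ)| ^ q := by ring
      _ ≤ _ := (mul_le_mul_of_nonneg_right hle (by positivity)).trans this

lemma summable_one_div_one_add_int_sq : Summable fun n : ℤ => 1 / (1 + (n : ℝ) ^ 2) := by
  refine .of_norm_bounded_eventually (Real.summable_one_div_int_pow.2 (one_lt_two)) ?_
  filter_upwards [(Set.finite_singleton (0 : ℤ)).compl_mem_cofinite] with n hn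
  have hn' : (0 : ℝ) < (n : ℝ) ^ 2 := by
    have : (n : ℝ) ≠ 0 := by exact_mod_cast hn
    positivity
  rw [Real.norm_of_nonneg (by positivity)]
  exact one_div_le_one_div_of_le hn' (by linarith)

/-- A smooth function on `[0, 1]` all of whose derivatives agree at the endpoints is the sum of a
rapidly convergent Fourier series. -/
lemma exists_hasSum_fourier {f : ℝ → ℂ} (hf : ContDiff ℝ ∞ f)
    (hend : ∀ j, iteratedDeriv j f 0 = iteratedDeriv j f 1) {k : ℕ} (hk : k ≠ 0) {M₀ M : ℝ}
    (hM₀ : ∀ x ∈ Set.Icc (0 : ℝ) 1, ‖f x‖ ≤ M₀)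
    (hM : ∀ x ∈ Set.Icc (0 : ℝ) 1, ‖iteratedDeriv (2 * k) f x‖ ≤ M) :
    ∃ c : ℤ → ℂ, (∀ n, ‖c n‖ ≤ 2 ^ k * (M₀ + M) / (1 + (n : ℝ) ^ 2) ^ k) ∧
      ∀ x ∈ Set.Ico (0 : ℝ) 1, HasSum (fun n : ℤ => c n * Complex.exp (2 * π * Complex.I * n * x))
        (f x) := by
  have h0 : (0 : ℝ) ∈ Set.Icc (0 : ℝ) 1 := by simp
  have hM₀0 : 0 ≤ M₀ := (norm_nonneg _).trans (hM₀ 0 h0)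
  have hM0 : 0 ≤ M := (norm_nonneg _).trans (hM 0 h0)
  let c : ℤ → ℂ := fourierCoeffOn (zero_lt_one : (0 : ℝ) < 1) f
  have hc : ∀ n, ‖c n‖ ≤ 2 ^ k * (M₀ + M) / (1 + (n : ℝ) ^ 2) ^ k := by
    intro n
    rw [le_div_iff₀ (by positivity)]
    rcases eq_or_ne n 0 with rfl | hn
    · have h2 : (1 : ℝ) ≤ 2 ^ k := one_le_pow₀ one_le_two
      have := norm_fourierCoeffOn_zero_one_le hM₀ 0
      simp only [Int.cast_zero, ne_eq, OfNat.ofNat_ne_zero, not_false_eq_true, zero_pow, add_zero,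
        one_pow, mul_one]
      nlinarith
    · have hn1 : (1 : ℝ) ≤ (n : ℝ) ^ 2 := by
        have : 0 < n ^ 2 := by positivity
        exact_mod_cast Int.add_one_le_iff.2 this
      have := norm_fourierCoeffOn_zero_one_mul_pow_le hf hend (2 * k) hM n
      rw [pow_mul, sq_abs] at this
      calc ‖c n‖ * (1 + (n : ℝ) ^ 2) ^ k ≤ ‖c n‖ * (2 * (n : ℝ) ^ 2) ^ k := by
            gcongr; linarith
        _ = 2 ^ k * (‖c n‖ * ((n : ℝ) ^ 2) ^ k) := by rw [mul_pow]; ring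
        _ ≤ 2 ^ k * (M₀ + M) := by
            gcongr
            exact this.trans (by linarith)
  refine ⟨c, hc, fun x hx => ?_⟩
  have hsum : Summable c := by
    refine .of_norm_bounded (summable_one_div_one_add_int_sq.mul_left (2 ^ k * (M₀ + M))) fun n => ?_
    refine (hc n).trans ?_
    rw [mul_one_div]
    gcongr
    exact le_self_pow₀ (by nlinarith [sq_nonneg (n : ℝ)]) hk
  let g : C(AddCircle (1 : ℝ), ℂ) := ⟨AddCircle.liftIco 1 0 f,
    AddCircle.liftIco_zero_continuous (by simpa using hend 0) hf.continuous.continuousOn⟩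
  have hg : fourierCoeff g = c := by
    ext n
    refine (fourierCoeff_liftIco_eq f n).trans ?_
    simp only [c]
    congr 1
    simp
  have := has_pointwise_sum_fourier_series_of_summable (f := g) (hg ▸ hsum) (x : AddCircle (1 : ℝ))
  rw [hg] at this
  convert! this using 1
  · ext n
    rw [fourier_coe_apply]
    simp
  · exact (AddCircle.liftIco_zero_coe_apply hx).symm

namespace HasRepBound

variable {d : ℕ}

lemma tsum_int {F : ℤ → EuclideanSpace ℝ (Fin d) → ℂ} {C : ℤ → ℝ}
    (h : ∀ k, HasRepBound (F k) (C k)) (hC : Summable C) :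
    HasRepBound (fun y => ∑' k, F k y) (∑' k, C k) := by
  let e : ℕ ≃ ℤ := Equiv.intEquivNat.symm
  have := HasRepBound.tsum (fun k => h (e k)) (e.summable_iff.2 hC)
  rw [e.tsum_eq C] at this
  exact this.congr fun y => (e.tsum_eq fun k => F k y).symm

end HasRepBound

lemma exists_norm_iteratedDeriv_two_exp_le {p : ℝ → ℝ} (hp : ContDiff ℝ ∞ p) :
    ∃ B, 0 ≤ B ∧ ∀ t : ℝ, ∀ u ∈ Set.Icc (0 : ℝ) 1,
      ‖iteratedDeriv 2 (fun u : ℝ => Complex.exp ((t * p u : ℝ) * Complex.I)) u‖ ≤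
        B * (1 + t ^ 2) := by
  have hp' : ContDiff ℝ ∞ (deriv p) := (contDiff_infty_iff_deriv.1 hp).2
  have hp'' : ContDiff ℝ ∞ (deriv (deriv p)) := (contDiff_infty_iff_deriv.1 hp').2
  obtain ⟨B₁, hB₁⟩ := isCompact_Icc.exists_bound_of_continuousOn (s := Set.Icc (0 : ℝ) 1)
    hp'.continuous.continuousOn
  obtain ⟨B₂, hB₂⟩ := isCompact_Icc.exists_bound_of_continuousOn (s := Set.Icc (0 : ℝ) 1)
    hp''.continuous.continuousOn
  have hB₁0 : 0 ≤ B₁ := (norm_nonneg _).trans (hB₁ 0 (by simp))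
  have hB₂0 : 0 ≤ B₂ := (norm_nonneg _).trans (hB₂ 0 (by simp))
  refine ⟨B₁ ^ 2 + B₂, by positivity, fun t u hu => ?_⟩
  have h1 : ∀ q : ℝ → ℝ, ContDiff ℝ ∞ q → ∀ u : ℝ,
      HasDerivAt (fun u : ℝ => ((t * q u : ℝ) : ℂ) * Complex.I)
        (((t * deriv q u : ℝ) : ℂ) * Complex.I) u := fun q hq u =>
    (((hq.differentiable (by simp) u).hasDerivAt.const_mul t).ofReal_comp).mul_const _
  have h2 : deriv (fun u : ℝ => Complex.exp ((t * p u : ℝ) * Complex.I)) = fun u : ℝ =>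
      Complex.exp ((t * p u : ℝ) * Complex.I) * (((t * deriv p u : ℝ) : ℂ) * Complex.I) :=
    funext fun u => (h1 p hp u).cexp.deriv
  rw [iteratedDeriv_succ, iteratedDeriv_one, h2, ((h1 p hp u).cexp.fun_mul (h1 _ hp' u)).deriv]
  have hn : ‖Complex.exp ((t * p u : ℝ) * Complex.I)‖ = 1 := Complex.norm_exp_ofReal_mul_I _
  refine (norm_add_le _ _).trans ?_
  simp only [norm_mul, hn, Complex.norm_I, one_mul, mul_one, Complex.norm_real]
  have ht : ‖t‖ ≤ 1 + t ^ 2 := by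
    rw [Real.norm_eq_abs]
    nlinarith [sq_abs t, sq_nonneg (|t| - 1)]
  have ht2 : ‖t‖ * ‖t‖ ≤ 1 + t ^ 2 := by
    rw [Real.norm_eq_abs]
    nlinarith [sq_abs t]
  calc ‖t‖ * ‖deriv p u‖ * (‖t‖ * ‖deriv p u‖) + ‖t‖ * ‖deriv (deriv p) u‖
      = (‖t‖ * ‖t‖) * (‖deriv p u‖ * ‖deriv p u‖) + ‖t‖ * ‖deriv (deriv p) u‖ := by ring
    _ ≤ (1 + t ^ 2) * (B₁ * B₁) + (1 + t ^ 2) * B₂ := by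
        gcongr
        · exact hB₁ u hu
        · exact hB₁ u hu
        · exact hB₂ u hu
    _ = _ := by ring

namespace HasRepBound

variable {d : ℕ}

lemma exp_periodic {p : ℝ → ℝ} (hp : ContDiff ℝ ∞ p) (hper : Function.Periodic p 1)
    (γ : EuclideanSpace ℝ (Fin d)) :
    ∃ C, ∀ t : ℝ, HasRepBound (fun y => Complex.exp ((t * p ⟪γ, y⟫ : ℝ) * Complex.I))
      (C * (1 + t ^ 2)) := by
  obtain ⟨B, hB0, hB⟩ := exists_norm_iteratedDeriv_two_exp_le hp
  refine ⟨(2 * (1 + B)) * ∑' n : ℤ, 1 / (1 + (n : ℝ) ^ 2), fun t => ?_⟩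
  have hsmooth : ContDiff ℝ ∞ fun u : ℝ => Complex.exp ((t * p u : ℝ) * Complex.I) :=
    ((Complex.ofRealCLM.contDiff.comp (contDiff_const.mul hp)).mul contDiff_const).cexp
  have hend : ∀ j, iteratedDeriv j (fun u : ℝ => Complex.exp ((t * p u : ℝ) * Complex.I)) 0 =
      iteratedDeriv j (fun u : ℝ => Complex.exp ((t * p u : ℝ) * Complex.I)) 1 := by
    intro j
    have := congrFun (iteratedDeriv_comp_add_const j
      (fun u : ℝ => Complex.exp ((t * p u : ℝ) * Complex.I)) 1) 0
    simp only [hper _, zero_add] at this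
    exact this
  obtain ⟨c, hc, hsum⟩ := exists_hasSum_fourier hsmooth hend one_ne_zero (M₀ := 1)
    (fun u _ => (Complex.norm_exp_ofReal_mul_I _).le) (hB t)
  have hc' : ∀ n, ‖c n‖ ≤ (2 * (1 + B) * (1 + t ^ 2)) * (1 / (1 + (n : ℝ) ^ 2)) := by
    intro n
    refine (hc n).trans ?_
    rw [mul_one_div, pow_one, pow_one]
    refine div_le_div_of_nonneg_right ?_ (by positivity)
    nlinarith [sq_nonneg t]
  have hrep := tsum_int (fun n : ℤ => (of_char (c n) (-(n : ℝ) • γ)).mono (hc' n))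
    (summable_one_div_one_add_int_sq.mul_left _)
  rw [tsum_mul_left] at hrep
  refine (hrep.congr fun y => ?_).mono (by ring_nf; rfl)
  have hy := hsum (Int.fract ⟪γ, y⟫) ⟨Int.fract_nonneg _, Int.fract_lt_one _⟩
  have hpf : p (Int.fract ⟪γ, y⟫) = p ⟪γ, y⟫ := by
    have := hper.sub_zsmul_eq ⌊⟪γ, y⟫⌋ (x := ⟪γ, y⟫)
    rwa [zsmul_one] at this
  rw [hpf] at hy
  rw [← hy.tsum_eq]
  congr 1; ext n
  congr 1
  rw [Complex.exp_eq_exp_iff_exists_int]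
  refine ⟨-n * ⌊⟪γ, y⟫⌋, ?_⟩
  rw [inner_smul_left, Int.fract]
  simp only [conj_trivial]
  push_cast
  ring

lemma exp_sum {ι : Type*} (s : Finset ι) (x : ι → EuclideanSpace ℝ (Fin d) → ℝ)
    (hx : ∀ i ∈ s, ∃ C, ∀ t : ℝ, HasRepBound (fun y => Complex.exp ((t * x i y : ℝ) * Complex.I))
      (C * (1 + t ^ 2))) :
    ∃ C, ∀ t : ℝ, HasRepBound (fun y => Complex.exp ((t * ∑ i ∈ s, x i y : ℝ) * Complex.I))
      (C * (1 + t ^ 2) ^ s.card) := by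
  classical
  induction s using Finset.induction_on with
  | empty => exact ⟨1, fun t => by simpa using const (d := d) 1⟩
  | insert i s hi ih =>
    obtain ⟨C, hC⟩ := hx i (Finset.mem_insert_self _ _)
    obtain ⟨D, hD⟩ := ih fun j hj => hx j (Finset.mem_insert_of_mem hj)
    refine ⟨C * D, fun t => (((hC t).mul (hD t)).congr fun y => ?_).mono ?_⟩
    · rw [← Complex.exp_add, Finset.sum_insert hi]
      congr 1; push_cast; ring
    · rw [Finset.card_insert_of_notMem hi]
      exact le_of_eq (by ring)

end HasRepBound

namespace WienerAlgebra

variable {d : ℕ}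

/-- Bounded real functions whose exponentials have polynomially growing norms are regular. -/
lemma IsRegular.of_exp {x : EuclideanSpace ℝ (Fin d) → ℝ} {B C : ℝ} {N : ℕ} (hB : ∀ y, |x y| ≤ B)
    (hx : ∀ t : ℝ, HasRepBound (fun y => Complex.exp ((t * x y : ℝ) * Complex.I))
      (C * (1 + t ^ 2) ^ N)) : IsRegular x := by
  intro φ hφ
  have hB0 : 0 ≤ B := (abs_nonneg _).trans (hB 0)
  have hC0 : 0 ≤ C := by simpa using (hx 0).nonneg
  let L : ℝ := 4 * B + 8
  have hL : 0 < L := by positivity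
  let b : ContDiffBump (1 / 2 : ℝ) := ⟨1 / 4, 1 / 3, by norm_num, by norm_num⟩
  let ψ : ℝ → ℂ := fun v => b v • φ (L * (v - 1 / 2))
  have hψ : ContDiff ℝ ∞ ψ := b.contDiff.smul (hφ.comp (by fun_prop))
  have hzero : ∀ v₀ : ℝ, 1 / 3 < |v₀ - 1 / 2| → ∀ j, iteratedDeriv j ψ v₀ = 0 := by
    intro v₀ hv₀ j
    have : ψ =ᶠ[𝓝 v₀] fun _ => 0 := by
      have : ∀ᶠ v in 𝓝 v₀, 1 / 3 < |v - 1 / 2| :=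
        (by fun_prop : Continuous fun v : ℝ => |v - 1 / 2|).continuousAt.eventually_const_lt hv₀
      filter_upwards [this] with v hv
      have hb : b v = 0 := b.zero_of_le_dist (by rw [Real.dist_eq]; exact hv.le)
      simp only [ψ, hb, zero_smul]
    rw [this.iteratedDeriv_eq]
    simp
  have hend : ∀ j, iteratedDeriv j ψ 0 = iteratedDeriv j ψ 1 := fun j => by
    rw [hzero 0 (by norm_num [abs_of_neg, abs_of_pos]) j,
      hzero 1 (by norm_num [abs_of_neg, abs_of_pos]) j]
  obtain ⟨M₀, hM₀⟩ := isCompact_Icc.exists_bound_of_continuousOn (s := Set.Icc (0 : ℝ) 1)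
    hψ.continuous.continuousOn
  obtain ⟨M, hM⟩ := isCompact_Icc.exists_bound_of_continuousOn (s := Set.Icc (0 : ℝ) 1)
    ((contDiff_infty.1 hψ _).continuous_iteratedDeriv' (2 * (N + 1))).continuousOn
  obtain ⟨c, hc, hsum⟩ := exists_hasSum_fourier hψ hend N.succ_ne_zero hM₀ hM
  have hM₀0 : 0 ≤ M₀ := (norm_nonneg _).trans (hM₀ 0 (by simp))
  have hM0 : 0 ≤ M := (norm_nonneg _).trans (hM 0 (by simp))
  have hterm : ∀ n : ℤ, HasRepBound (fun y => c n * Complex.exp (2 * π * Complex.I * n *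
      ((x y / L + 1 / 2 : ℝ) : ℂ)))
      ((2 ^ (N + 1) * (M₀ + M) * C) * (1 / (1 + (n : ℝ) ^ 2))) := by
    intro n
    have h1 := (hx (2 * π * n / L)).const_mul (c n * Complex.exp ((π * n : ℝ) * Complex.I))
    refine (h1.congr fun y => ?_).mono ?_
    · rw [mul_assoc (c n), ← Complex.exp_add]
      congr 2
      push_cast
      have : (L : ℂ) ≠ 0 := by exact_mod_cast hL.ne'
      field_simp
      ring
    · rw [norm_mul, Complex.norm_exp_ofReal_mul_I, mul_one]
      have ht : (2 * π * n / L) ^ 2 ≤ (n : ℝ) ^ 2 := by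
        rw [mul_div_right_comm, mul_pow]
        refine mul_le_of_le_one_left (sq_nonneg _) (pow_le_one₀ (by positivity) ?_)
        rw [div_le_one hL]
        simp only [L]
        linarith [Real.pi_lt_four]
      calc ‖c n‖ * (C * (1 + (2 * π * n / L) ^ 2) ^ N)
          ≤ (2 ^ (N + 1) * (M₀ + M) / (1 + (n : ℝ) ^ 2) ^ (N + 1)) *
            (C * (1 + (n : ℝ) ^ 2) ^ N) := by
            gcongr
            exact hc n
        _ = _ := by
            have : (1 + (n : ℝ) ^ 2) ≠ 0 := by positivity
            field_simp
            ring
  obtain ⟨X, hX⟩ := exists_toFun_eq (HasRepBound.tsum_int hterm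
    (summable_one_div_one_add_int_sq.mul_left _))
  refine ⟨X, fun y => ?_⟩
  have hxL : |x y / L| ≤ 1 / 4 := by
    rw [abs_div, abs_of_pos hL, div_le_iff₀ hL]
    simp only [L]
    linarith [hB y]
  have hxL' := abs_le.1 hxL
  simp only [hX]
  rw [(hsum (x y / L + 1 / 2) ⟨by linarith, by linarith⟩).tsum_eq]
  have hb : b (x y / L + 1 / 2) = 1 := b.one_of_mem_closedBall (by
    rw [Metric.mem_closedBall, Real.dist_eq, add_sub_cancel_right]; exact hxL)
  simp only [ψ, hb, one_smul, add_sub_cancel_right]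
  rw [mul_div_cancel₀ _ hL.ne']

end WienerAlgebra

namespace WienerAlgebra

variable {d : ℕ}

lemma contDiff_char (c : ℂ) :
    ContDiff ℝ ∞ fun u : ℝ => c * Complex.exp (-2 * π * Complex.I * (u : ℂ)) :=
  contDiff_const.mul (contDiff_const.mul Complex.ofRealCLM.contDiff).cexp

lemma isRegular_re_sum_char (a : ℕ → ℂ) (γ : ℕ → EuclideanSpace ℝ (Fin d)) (N : ℕ) :
    IsRegular fun y => ∑ n ∈ Finset.range N,
      (a n * Complex.exp (-2 * π * Complex.I * (⟪γ n, y⟫ : ℝ))).re := by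
  obtain ⟨C, hC⟩ := HasRepBound.exp_sum (Finset.range N)
    (fun n y => (a n * Complex.exp (-2 * π * Complex.I * (⟪γ n, y⟫ : ℝ))).re) fun n _ =>
      HasRepBound.exp_periodic
        (p := fun u : ℝ => (a n * Complex.exp (-2 * π * Complex.I * (u : ℂ))).re)
        (Complex.reCLM.contDiff.comp (contDiff_char (a n))) (fun u => by
          have : Complex.exp (-2 * π * Complex.I * ((u + 1 : ℝ) : ℂ)) =
              Complex.exp (-2 * π * Complex.I * (u : ℂ)) :=
            Complex.exp_eq_exp_iff_exists_int.2 ⟨-1, by push_cast; ring⟩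
          simp only [this]) (γ n)
  refine IsRegular.of_exp (B := ∑ n ∈ Finset.range N, ‖a n‖) (fun y => ?_) hC
  refine (Finset.abs_sum_le_sum_abs _ _).trans (Finset.sum_le_sum fun n _ => ?_)
  refine (Complex.abs_re_le_norm _).trans_eq ?_
  rw [norm_mul, HasRepBound.norm_char, mul_one]

lemma IsRegular.add_of_hasCompactSupport {p σ : EuclideanSpace ℝ (Fin d) → ℝ} (hp : IsRegular p)
    (hp' : ContDiff ℝ ∞ p) (hσ : HasCompactSupport σ) (hσ' : ContDiff ℝ ∞ σ) :
    IsRegular fun y => p y + σ y := by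
  intro φ hφ
  obtain ⟨X, hX⟩ := hp φ hφ
  have hsupp : HasCompactSupport fun y => φ (p y + σ y) - φ (p y) := by
    refine hσ.mono fun y hy hy0 => hy ?_
    beta_reduce
    rw [show σ y = 0 from hy0, add_zero, sub_self]
  obtain ⟨C, hC⟩ := HasRepBound.of_hasCompactSupport hsupp
    ((hφ.comp (hp'.add hσ')).sub (hφ.comp hp'))
  obtain ⟨Y, hY⟩ := exists_toFun_eq hC
  refine ⟨X + Y, fun y => ?_⟩
  rw [map_add, Pi.add_apply, hX, hY]
  ring

/-- The real part of a Fourier–Stieltjes transform is a small perturbation of a regular function. -/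
lemma exists_isRegular_re {F : EuclideanSpace ℝ (Fin d) → ℂ} {C : ℝ} (hF : HasRepBound F C) {ε : ℝ}
    (hε : 0 < ε) : ∃ x : EuclideanSpace ℝ (Fin d) → ℝ, IsRegular x ∧
      ∃ X : WienerAlgebra d, ‖X‖ ≤ ε ∧ ∀ y, toFun d X y = ((F y).re - x y : ℝ) := by
  obtain ⟨f, a, γ, hf, ha, -, hF⟩ := hF
  obtain ⟨N, hN⟩ := ((tendsto_sum_nat_add fun n => ‖a n‖).eventually_lt_const (half_pos hε)).exists
  obtain ⟨g, hg, hfg⟩ := SchwartzMap.exists_hasCompactSupport_fourier_integral_sub_le hf (half_pos hε)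
  let P : EuclideanSpace ℝ (Fin d) → ℂ := fun y => ∑ n ∈ Finset.range N,
    a n * Complex.exp (-2 * π * Complex.I * (⟪γ n, y⟫ : ℝ))
  let p : EuclideanSpace ℝ (Fin d) → ℝ := fun y => ∑ n ∈ Finset.range N,
    (a n * Complex.exp (-2 * π * Complex.I * (⟪γ n, y⟫ : ℝ))).re
  have hp : ContDiff ℝ ∞ p := ContDiff.sum fun n _ => Complex.reCLM.contDiff.comp
    ((contDiff_char (a n)).comp (contDiff_const.inner ℝ contDiff_id))
  let σ : EuclideanSpace ℝ (Fin d) → ℝ := fun y => ((𝓕 g : 𝓢(EuclideanSpace ℝ (Fin d), ℂ)) y).re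
  have hσ : ContDiff ℝ ∞ σ := Complex.reCLM.contDiff.comp (SchwartzMap.smooth _ ⊤)
  refine ⟨fun y => p y + σ y, (isRegular_re_sum_char a γ N).add_of_hasCompactSupport hp
    (hg.comp_left Complex.zero_re) hσ, ?_⟩
  have hG : HasRepBound (fun y => F y - (P y + (𝓕 g : 𝓢(EuclideanSpace ℝ (Fin d), ℂ)) y)) ε := by
    refine ⟨fun x => f x - g x, fun n => a (n + N), fun n => γ (n + N), hf.sub g.integrable,
      (summable_nat_add_iff N).2 ha, (add_le_add hfg hN.le).trans_eq (add_halves ε), fun y => ?_⟩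
    have h1 : 𝓕 (fun x => f x - g x) y = 𝓕 f y - 𝓕 (g : EuclideanSpace ℝ (Fin d) → ℂ) y := by
      simp only [Real.fourier_eq, smul_sub]
      exact integral_sub ((Real.fourierIntegral_convergent_iff y).2 hf)
        ((Real.fourierIntegral_convergent_iff y).2 g.integrable)
    beta_reduce
    rw [hF, measureFourier, measureFourier, h1, SchwartzMap.fourier_coe,
      ← (HasRepBound.summable_char ha γ y).sum_add_tsum_nat_add N]
    simp only [P]
    ring
  obtain ⟨X, hX⟩ := exists_toFun_eq ((hG.const_mul (1 / 2)).add (hG.conj.const_mul (1 / 2)))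
  refine ⟨X, norm_le (hX ▸ ((hG.const_mul (1 / 2)).add (hG.conj.const_mul (1 / 2))).mono ?_),
    fun y => ?_⟩
  · norm_num
    linarith
  · have hPp : (P y).re = p y := by simp only [P, p, Complex.re_sum]
    simp only [hX]
    rw [← mul_add, Complex.add_conj, Complex.sub_re, Complex.add_re, hPp]
    push_cast
    ring

end WienerAlgebra

open WienerAlgebra in
/-- **Local Wiener–Levi theorem for measures without singular components.**
Let `K ⊆ ℂ` be compact and let `h` be real-analytic on an open neighborhood of `K`.
Then for every complex measure `μ = f dx + Σ_n a_n δ_{γ_n}` on `ℝ^d` of finite total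
variation without singular component there is a measure `ν = g dx + Σ_n b_n δ_{ρ_n}` of
finite total variation without singular component such that `ν̂(y) = h(μ̂(y))` whenever
`μ̂(y) ∈ K`. -/
theorem wiener_levi_local_measures {d : ℕ}
    (K : Set ℂ) (hK : IsCompact K)
    (h : ℂ → ℂ) (V : Set ℂ) (hV : IsOpen V) (hKV : K ⊆ V)
    (hh : AnalyticOnNhd ℝ h V)
    (f : EuclideanSpace ℝ (Fin d) → ℂ) (hf : Integrable f)
    (a : ℕ → ℂ) (ha : Summable fun n => ‖a n‖)
    (γ : ℕ → EuclideanSpace ℝ (Fin d)) :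
    ∃ (g : EuclideanSpace ℝ (Fin d) → ℂ) (b : ℕ → ℂ) (ρ : ℕ → EuclideanSpace ℝ (Fin d)),
      Integrable g ∧ Summable (fun n => ‖b n‖) ∧
      ∀ y : EuclideanSpace ℝ (Fin d), measureFourier f a γ y ∈ K →
        measureFourier g b ρ y = h (measureFourier f a γ y) := by
  have hF : HasRepBound (measureFourier f a γ) ((∫ x, ‖f x‖) + ∑' n, ‖a n‖) :=
    ⟨f, a, γ, hf, ha, le_rfl, fun _ => rfl⟩
  set F := measureFourier f a γ
  have hloc : ∀ c : ℂ, ∃ δ > (0 : ℝ), c ∈ K → ∀ (x₀ x₁ : EuclideanSpace ℝ (Fin d) → ℝ),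
      WienerAlgebra.IsRegular x₀ → WienerAlgebra.IsRegular x₁ → ∀ X₀ X₁ : WienerAlgebra d, ‖X₀‖ ≤ δ → ‖X₁‖ ≤ δ →
      ∃ H : WienerAlgebra d, ∀ (y : EuclideanSpace ℝ (Fin d)) (s t : ℝ),
        toFun d X₀ y = s → toFun d X₁ y = t → |x₀ y - c.re| ≤ δ → |x₁ y - c.im| ≤ δ →
        toFun d H y = h ((x₀ y + s : ℝ) + (x₁ y + t : ℝ) * Complex.I) := by
    intro c
    by_cases hc : c ∈ K
    · obtain ⟨δ, hδ, H⟩ := exists_local_comp (d := d) (hh c (hKV hc))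
      exact ⟨δ, hδ, fun _ => H⟩
    · exact ⟨1, one_pos, fun hc' => absurd hc' hc⟩
  choose δ hδ hloc using hloc
  obtain ⟨s, hsK, hs⟩ := hK.elim_nhds_subcover (fun c => Metric.ball c (δ c / 4))
    fun c _ => Metric.ball_mem_nhds c (by linarith [hδ c])
  obtain ⟨ε, hε, hεδ⟩ : ∃ ε > (0 : ℝ), ∀ c ∈ s, ε ≤ δ c / 4 := by
    have := (Filter.eventually_all_finset s).2 fun c _ =>
      Ioc_mem_nhdsGT (show (0 : ℝ) < δ c / 4 by linarith [hδ c])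
    obtain ⟨ε, hε, hε0⟩ := (this.and self_mem_nhdsWithin).exists
    exact ⟨ε, hε0, fun c hc => (hε c hc).2⟩
  obtain ⟨x₀, hx₀, X₀, hX₀, hX₀F⟩ := exists_isRegular_re hF hε
  obtain ⟨x₁, hx₁, X₁, hX₁, hX₁F⟩ := exists_isRegular_re (hF.const_mul (-Complex.I)) hε
  have hre : ∀ y, |(F y).re - x₀ y| ≤ ε := fun y => by
    have := (norm_apply_le X₀ y).trans hX₀
    rwa [hX₀F, Complex.norm_real, Real.norm_eq_abs] at this
  replace hX₁F : ∀ y, toFun d X₁ y = ((F y).im - x₁ y : ℝ) := fun y => by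
    rw [hX₁F]
    simp
  have him : ∀ y, |(F y).im - x₁ y| ≤ ε := fun y => by
    have := (norm_apply_le X₁ y).trans hX₁
    rwa [hX₁F, Complex.norm_real, Real.norm_eq_abs] at this
  have hbump : ∀ x : EuclideanSpace ℝ (Fin d) → ℝ, WienerAlgebra.IsRegular x → ∀ r c : ℝ, 0 < r →
      ∃ k : WienerAlgebra d, (∀ y, |x y - c| ≤ r / 2 → toFun d k y = 1) ∧
        ∀ y, r < |x y - c| → toFun d k y = 0 := by
    intro x hx r c hr
    let b : ContDiffBump c := ⟨r / 2, r, half_pos hr, half_lt_self hr⟩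
    obtain ⟨k, hk⟩ := hx (fun t => (b t : ℂ)) (Complex.ofRealCLM.contDiff.comp b.contDiff)
    refine ⟨k, fun y hy => ?_, fun y hy => ?_⟩
    · rw [hk, b.one_of_mem_closedBall (by rwa [Metric.mem_closedBall, Real.dist_eq]),
        Complex.ofReal_one]
    · rw [hk, b.zero_of_le_dist (by rw [Real.dist_eq]; exact hy.le), Complex.ofReal_zero]
  choose k₀ hk₀ hk₀' using fun c : ℂ => hbump x₀ hx₀ (δ c) c.re (hδ c)
  choose k₁ hk₁ hk₁' using fun c : ℂ => hbump x₁ hx₁ (δ c) c.im (hδ c)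
  obtain ⟨H, hH⟩ := exists_glue s (fun y => h (F y)) (fun c => k₀ c * k₁ c) fun c hc => by
    have hεc : ε ≤ δ c := (hεδ c hc).trans (by linarith [hδ c])
    obtain ⟨H, hH⟩ := hloc c (hsK c hc) x₀ x₁ hx₀ hx₁ X₀ X₁ (hX₀.trans hεc) (hX₁.trans hεc)
    refine ⟨k₀ c * k₁ c * H, fun y => ?_⟩
    rw [map_mul, Pi.mul_apply]
    rcases lt_or_ge (δ c) |x₀ y - c.re| with h0 | h0
    · simp [hk₀' c y h0]
    rcases lt_or_ge (δ c) |x₁ y - c.im| with h1 | h1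
    · simp [hk₁' c y h1]
    rw [hH y _ _ (hX₀F y) (hX₁F y) h0 h1, add_sub_cancel, add_sub_cancel, Complex.re_add_im]
  obtain ⟨C, g, b, ρ, hg, hb, -, hgb⟩ := H.exists_bound
  refine ⟨g, b, ρ, hg, hb, fun y hy => ?_⟩
  rw [← hgb, hH]
  obtain ⟨c, hc, hyc⟩ := Set.mem_iUnion₂.1 (hs hy)
  rw [Metric.mem_ball, Complex.dist_eq] at hyc
  have h0 : |x₀ y - c.re| ≤ δ c / 2 := by
    have h1 := Complex.abs_re_le_norm (F y - c)
    rw [Complex.sub_re] at h1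
    have h2 := abs_sub_comm (F y).re (x₀ y) ▸ hre y
    have h3 := abs_sub_le (x₀ y) (F y).re c.re
    linarith [hεδ c hc]
  have h1 : |x₁ y - c.im| ≤ δ c / 2 := by
    have h1 := Complex.abs_im_le_norm (F y - c)
    rw [Complex.sub_im] at h1
    have h2 := abs_sub_comm (F y).im (x₁ y) ▸ him y
    have h3 := abs_sub_le (x₁ y) (F y).im c.im
    linarith [hεδ c hc]
  rw [Finset.prod_eq_zero hc (by simp [hk₀ c y h0, hk₁ c y h1]), sub_zero, one_mul]
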